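/- Let 𝒫 be a simple type system on Ω that is atomic quasinuclear but not branching. Then there is a finite subset D of 𝔠 consisting of rational (eventually periodic) points of the same tail class such that Stab_V(𝒫) equals the setwise stabilizer Stab_V(D), and this is a maximal subgroup of Thompson's group V. -/

import Mathlib

/-!
A set `D` of points defines a type system, in which two addresses are equivalent when `D` has the
same trace on their cones (`SameTrace`). For finite `D` the stabilizer of this type system is the
setwise stabilizer of `D`: the cone of a long address misses `D` exactly when the two children of
the address have the same type.

In the nonbranching case every address in `𝒬` has exactly one child in `𝒬`, so through each
address of `𝒬` passes exactly one infinite path that stays in `𝒬`. The limit points of these paths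
form a finite set `D` (`limitSet`), and since `𝒬` is strongly connected each path runs through all
types in `𝒬` and returns to its start, so the points of `D` are eventually periodic and share a
tail class. The trace of `D` on a cone depends only on the type of the address, so by simplicity
`𝒫` is the type system of traces of `D`.

For maximality, every swap of two points of a tail class agrees on any given finite set with an
element of `V`. If a subgroup `H` of `V` properly contains the stabilizer of `D`, the points that
can be swapped by `H` in this sense form an equivalence relation that identifies the points in `D`,
the points of the tail class outside `D`, and, by conjugation with an element of `H` moving a point
of `D` out of `D`, some point of `D` with one outside. Hence `H` realizes every finite injection
within the tail class, and in particular moves `D` as any prescribed element of `V` does.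
-/

/-- Addresses: finite words over the alphabet `{0,1}` (`Bool`). -/
abbrev Addr : Type := List Bool

/-- Cantor space: infinite words over the alphabet `{0,1}`. -/
abbrev Cantor : Type := ℕ → Bool

/-- Prepend the finite word `α` to the infinite word `w`. -/
def wcat (α : Addr) (w : Cantor) : Cantor := fun n =>
  if h : n < α.length then α.get ⟨n, h⟩ else w (n - α.length)

/-- The cone of the address `α`: the set of infinite words having `α` as a prefix. -/
def cone (α : Addr) : Set Cantor := Set.range (wcat α)

/-- `g` is a prefix substitution map: there are partitions of Cantor space into cones
`(A i)𝔠` and `(B i)𝔠` such that `g` maps `(A i) w` to `(B i) w`. -/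
def IsPrefixSubst (g : Equiv.Perm Cantor) : Prop :=
  ∃ (n : ℕ) (A B : Fin n → Addr),
    (∀ i j, i ≠ j → Disjoint (cone (A i)) (cone (A j))) ∧
    (⋃ i, cone (A i)) = Set.univ ∧
    (∀ i j, i ≠ j → Disjoint (cone (B i)) (cone (B j))) ∧
    (⋃ i, cone (B i)) = Set.univ ∧
    (∀ i w, g (wcat (A i) w) = wcat (B i) w)

/-- Thompson's group `V`, as the set of prefix substitution maps inside `Equiv.Perm Cantor`. -/
def VSet : Set (Equiv.Perm Cantor) := { g | IsPrefixSubst g }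

/-- `α ^ g = β` : `g` maps the cone of `α` onto the cone of `β` by the prefix
substitution `α ↦ β`. -/
def actsOn (g : Equiv.Perm Cantor) (α β : Addr) : Prop :=
  ∀ w, g (wcat α w) = wcat β w

/-- A subset of `Equiv.Perm Cantor` that is closed under the group operations. -/
def IsSubgroupSet (M : Set (Equiv.Perm Cantor)) : Prop :=
  (1 : Equiv.Perm Cantor) ∈ M ∧ (∀ g ∈ M, ∀ h ∈ M, g * h ∈ M) ∧ ∀ g ∈ M, g⁻¹ ∈ M

/-- `M` is a maximal subgroup of Thompson's group `V`. -/
def IsMaximalSubgroupOfV (M : Set (Equiv.Perm Cantor)) : Prop :=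
  IsSubgroupSet M ∧ M ⊆ VSet ∧ M ≠ VSet ∧
    ∀ H : Set (Equiv.Perm Cantor),
      IsSubgroupSet H → M ⊆ H → H ⊆ VSet → H = M ∨ H = VSet

/-- A relation on addresses is coherent if `α ∼ β` implies `α0 ∼ β0` and `α1 ∼ β1`. -/
def Coherent (r : Addr → Addr → Prop) : Prop :=
  ∀ α β, r α β → r (α ++ [false]) (β ++ [false]) ∧ r (α ++ [true]) (β ++ [true])

/-- A relation on addresses is reduced if `α0 ∼ β0` and `α1 ∼ β1` imply `α ∼ β`. -/
def Reduced (r : Addr → Addr → Prop) : Prop :=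
  ∀ α β, r (α ++ [false]) (β ++ [false]) → r (α ++ [true]) (β ++ [true]) → r α β

/-- A type system: a coherent and reduced equivalence relation on addresses
(identified with the partition of `Ω` into its classes). -/
def IsTypeSystem (r : Addr → Addr → Prop) : Prop :=
  Equivalence r ∧ Coherent r ∧ Reduced r

/-- `g` fixes the parts of `r`: for all but finitely many addresses `α`, the image
`α ^ g` is defined and equivalent to `α`. -/
def FixesParts (r : Addr → Addr → Prop) (g : Equiv.Perm Cantor) : Prop :=
  { α : Addr | ¬ ∃ β, actsOn g α β ∧ r α β }.Finite

/-- `g` stabilizes `r`: on some cofinite set of addresses, `α ^ g` is defined and `g`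
preserves equivalence and inequivalence of addresses. -/
def Stabilizes (r : Addr → Addr → Prop) (g : Equiv.Perm Cantor) : Prop :=
  ∃ Ω₀ : Set Addr, Ω₀ᶜ.Finite ∧ (∀ α ∈ Ω₀, ∃ β, actsOn g α β) ∧
    ∀ α ∈ Ω₀, ∀ α' ∈ Ω₀, ∀ β β', actsOn g α β → actsOn g α' β' → (r α α' ↔ r β β')

/-- `Fix_V(𝒫)`: the elements of Thompson's group `V` fixing the parts of `r`. -/
def FixSet (r : Addr → Addr → Prop) : Set (Equiv.Perm Cantor) :=
  { g | IsPrefixSubst g ∧ FixesParts r g }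

/-- `Stab_V(𝒫)`: the elements of Thompson's group `V` stabilizing `r`. -/
def StabSet (r : Addr → Addr → Prop) : Set (Equiv.Perm Cantor) :=
  { g | IsPrefixSubst g ∧ Stabilizes r g }

/-- The type system of `s` is a quotient of that of `r`. -/
def IsQuotientOf (s r : Addr → Addr → Prop) : Prop :=
  IsTypeSystem s ∧ ∀ α β, r α β → s α β

/-- A simple type system: the universal relation is a proper quotient, and every
quotient is either the type system itself or the universal one. -/
def SimpleTS (r : Addr → Addr → Prop) : Prop :=
  IsTypeSystem r ∧ (∃ α β : Addr, ¬ r α β) ∧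
    ∀ s : Addr → Addr → Prop, IsQuotientOf s r →
      (∀ α β, s α β ↔ r α β) ∨ ∀ α β, s α β

/-- The type (equivalence class) of the address `α`. -/
def typeOf (r : Addr → Addr → Prop) (α : Addr) : Set Addr := { β | r α β }

/-- `S` is a union of `r`-classes, i.e. a set of types of the type system. -/
def Saturated (r : Addr → Addr → Prop) (S : Set Addr) : Prop :=
  ∀ α ∈ S, ∀ β, r α β → β ∈ S

/-- `S` is child-closed: with each address (type) it contains both of its children. -/
def ChildClosed (S : Set Addr) : Prop :=
  ∀ α ∈ S, α ++ [false] ∈ S ∧ α ++ [true] ∈ S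

/-- The word `γ` determines a path through `S` from (the type of) `α`. -/
def PathThrough (S : Set Addr) (α γ : Addr) : Prop :=
  ∀ ζ : Addr, ζ <+: γ → α ++ ζ ∈ S

/-- `S` is strongly connected. -/
def StronglyConnected (r : Addr → Addr → Prop) (S : Set Addr) : Prop :=
  ∀ α ∈ S, ∀ β ∈ S, ∃ γ : Addr, γ ≠ [] ∧ PathThrough S α γ ∧ r (α ++ γ) β

/-- A nucleus: a (nonempty) child-closed and strongly connected set of types. -/
def IsNucleus (r : Addr → Addr → Prop) (S : Set Addr) : Prop :=
  S.Nonempty ∧ Saturated r S ∧ ChildClosed S ∧ StronglyConnected r S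

/-- `S` consists of exactly one type. -/
def IsSingleType (r : Addr → Addr → Prop) (S : Set Addr) : Prop :=
  ∃ α : Addr, S = typeOf r α

/-- A multinuclear type system: finitely many pairwise disjoint nuclei containing the
types of all sufficiently long addresses. -/
def Multinuclear (r : Addr → Addr → Prop) : Prop :=
  ∃ (k : ℕ) (Q : Fin k → Set Addr), 0 < k ∧ (∀ i, IsNucleus r (Q i)) ∧
    (∀ i j, i ≠ j → Disjoint (Q i) (Q j)) ∧
    ∃ t : ℕ, 0 < t ∧ ∀ α : Addr, t ≤ α.length → ∃ i, α ∈ Q i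

/-- A nuclear type system: a single nucleus containing the types of all sufficiently
long addresses. -/
def Nuclear (r : Addr → Addr → Prop) : Prop :=
  ∃ Q : Set Addr, IsNucleus r Q ∧ ∃ t : ℕ, 0 < t ∧ ∀ α : Addr, t ≤ α.length → α ∈ Q

/-- An atomic binuclear type system: two disjoint singleton nuclei containing the types
of all sufficiently long addresses. -/
def AtomicBinuclear (r : Addr → Addr → Prop) : Prop :=
  ∃ Q₁ Q₂ : Set Addr, IsNucleus r Q₁ ∧ IsNucleus r Q₂ ∧ Disjoint Q₁ Q₂ ∧
    IsSingleType r Q₁ ∧ IsSingleType r Q₂ ∧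
    ∃ t : ℕ, 0 < t ∧ ∀ α : Addr, t ≤ α.length → α ∈ Q₁ ∪ Q₂

/-- The data `(𝒬, ℛ)` witnessing that a type system is quasinuclear. -/
def QuasinuclearData (r : Addr → Addr → Prop) (Q R : Set Addr) : Prop :=
  Q.Nonempty ∧ R.Nonempty ∧ Saturated r Q ∧ Saturated r R ∧ Disjoint Q R ∧
    (∃ t : ℕ, 0 < t ∧ ∀ α : Addr, t ≤ α.length → α ∈ Q ∪ R) ∧
    IsNucleus r R ∧ StronglyConnected r Q ∧ ChildClosed (Q ∪ R) ∧
    ∀ α ∈ Q, ∀ β ∈ R, ∃ γ : Addr, r (α ++ γ) β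

/-- A quasinuclear type system. -/
def Quasinuclear (r : Addr → Addr → Prop) : Prop :=
  ∃ Q R : Set Addr, QuasinuclearData r Q R

/-- `𝒬†`: the types of `𝒬` both of whose children lie in `𝒬`. -/
def QDagger (Q : Set Addr) : Set Addr :=
  { α ∈ Q | α ++ [false] ∈ Q ∧ α ++ [true] ∈ Q }

/-- An atomic quasinuclear type system: the nucleus `ℛ` is a single type. -/
def AtomicQuasinuclear (r : Addr → Addr → Prop) : Prop :=
  ∃ Q R : Set Addr, QuasinuclearData r Q R ∧ IsSingleType r R

/-- `u` and `v` lie in the same tail class. -/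
def TailEq (u v : Cantor) : Prop :=
  ∃ (α β : Addr) (w : Cantor), u = wcat α w ∧ v = wcat β w

/-- A point of Cantor space is rational if it is eventually periodic. -/
def EventuallyPeriodic (u : Cantor) : Prop :=
  ∃ k p : ℕ, 0 < p ∧ ∀ n : ℕ, k ≤ n → u (n + p) = u n

/-- The setwise stabilizer in Thompson's group `V` of a subset `D` of Cantor space. -/
def setStab (D : Set Cantor) : Set (Equiv.Perm Cantor) :=
  { g | IsPrefixSubst g ∧ (fun w => g w) '' D = D }

open Equiv Set Filter
open scoped Pointwise

/-! ### Maximality of stabilizers of finite sets in permutation groups -/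

section PermutationGroups

variable {X : Type*}

/-- The closure of a permutation group in the topology of pointwise convergence: the permutations
that agree on every finite set with some element of the group. -/
def pointwiseClosure (H : Subgroup (Perm X)) : Subgroup (Perm X) where
  carrier := {σ | ∀ F : Set X, F.Finite → ∃ h ∈ H, EqOn h σ F}
  one_mem' _ _ := ⟨1, H.one_mem, eqOn_refl _ _⟩
  mul_mem' {σ τ} hσ hτ F hF := by
    obtain ⟨k, hk, hkF⟩ := hτ F hF
    obtain ⟨h, hh, hhF⟩ := hσ (τ '' F) (hF.image τ)
    refine ⟨h * k, H.mul_mem hh hk, fun x hx => ?_⟩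
    rw [Perm.mul_apply, hkF hx, hhF (mem_image_of_mem τ hx), Perm.mul_apply]
  inv_mem' {σ} hσ F hF := by
    obtain ⟨h, hh, hhF⟩ := hσ (⇑(σ⁻¹) '' F) (hF.image _)
    refine ⟨h⁻¹, H.inv_mem hh, fun x hx => ?_⟩
    rw [Perm.inv_eq_iff_eq, hhF (mem_image_of_mem _ hx), Perm.inv_def, apply_symm_apply]

theorem le_pointwiseClosure (H : Subgroup (Perm X)) : H ≤ pointwiseClosure H :=
  fun h hh _ _ => ⟨h, hh, eqOn_refl _ _⟩

theorem pointwiseClosure_mono {H K : Subgroup (Perm X)} (h : H ≤ K) :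
    pointwiseClosure H ≤ pointwiseClosure K := fun _ hσ F hF =>
  let ⟨k, hk, hkF⟩ := hσ F hF
  ⟨k, h hk, hkF⟩

variable [DecidableEq X]

theorem exists_mem_eqOn_of_swap_mem {K : Subgroup (Perm X)} {T F : Set X} {σ : Perm X}
    (hK : ∀ x ∈ T, ∀ y ∈ T, swap x y ∈ K) (hF : F.Finite) (hFT : F ⊆ T)
    (hσ : MapsTo σ F T) : ∃ τ ∈ K, EqOn τ σ F ∧ MapsTo τ T T := by
  induction F, hF using Set.Finite.induction_on with
  | empty => exact ⟨1, K.one_mem, eqOn_empty _ _, mapsTo_id T⟩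
  | @insert a F ha _ ih =>
    obtain ⟨τ, hτ, hτF, hτT⟩ :=
      ih ((subset_insert _ _).trans hFT) (hσ.mono_left (subset_insert _ _))
    have hτa : τ a ∈ T := hτT (hFT (mem_insert _ _))
    have hσa : σ a ∈ T := hσ (mem_insert _ _)
    refine ⟨swap (τ a) (σ a) * τ, K.mul_mem (hK _ hτa _ hσa) hτ, ?_, ?_⟩
    · rintro z (rfl | hz)
      · simp
      · have hza : z ≠ a := ne_of_mem_of_not_mem hz ha
        rw [Perm.mul_apply, swap_apply_of_ne_of_ne (τ.injective.ne hza)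
          (hτF hz ▸ σ.injective.ne hza), hτF hz]
    · intro z hz
      rw [Perm.mul_apply, swap_apply_def]
      split_ifs
      exacts [hσa, hτa, hτT hz]

theorem swap_mem_pointwiseClosure_inf_stabilizer {G : Subgroup (Perm X)} {D : Set X}
    (hD : D.Finite) {x y : X} (hxy : x ∈ D ↔ y ∈ D) (hG : swap x y ∈ pointwiseClosure G) :
    swap x y ∈ pointwiseClosure (G ⊓ MulAction.stabilizer (Perm X) D) := by
  intro F hF
  obtain ⟨g, hg, hgF⟩ := hG (F ∪ D) (hF.union hD)
  refine ⟨g, ⟨hg, (MulAction.mem_stabilizer_set' hD).2 fun z hz => ?_⟩,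
    hgF.mono subset_union_left⟩
  rw [Perm.smul_def, hgF (Or.inr hz), swap_apply_def]
  split_ifs with hzx hzy
  exacts [hxy.1 (hzx ▸ hz), hxy.2 (hzy ▸ hz), hz]

theorem swap_mem_pointwiseClosure_of_inf_stabilizer_lt {G H : Subgroup (Perm X)} {T D : Set X}
    (hT : T.Infinite) (hGT : ∀ g ∈ G, MapsTo g T T) (hD : D.Finite) (hDT : D ⊆ T)
    (hswap : ∀ x ∈ T, ∀ y ∈ T, swap x y ∈ pointwiseClosure G) (hHG : H ≤ G)
    (hH : G ⊓ MulAction.stabilizer (Perm X) D < H) :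
    ∀ x ∈ T, ∀ y ∈ T, swap x y ∈ pointwiseClosure H := by
  have hsame : ∀ x ∈ T, ∀ y ∈ T, (x ∈ D ↔ y ∈ D) → swap x y ∈ pointwiseClosure H :=
    fun x hx y hy hxy => pointwiseClosure_mono hH.le <|
      swap_mem_pointwiseClosure_inf_stabilizer hD hxy (hswap x hx y hy)
  obtain ⟨h, hh, hhD⟩ := SetLike.exists_of_lt hH
  obtain ⟨a, ha, hha⟩ : ∃ a ∈ D, h a ∉ D := by
    by_contra! hcon
    exact hhD ⟨hHG hh, (MulAction.mem_stabilizer_set' hD).2 hcon⟩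
  -- Conjugating by `h` a swap of two points outside `D` joins a point of `D` to one outside.
  obtain ⟨b, hb, hbD, hab⟩ : ∃ b ∈ T, b ∉ D ∧ swap a b ∈ pointwiseClosure H := by
    obtain ⟨c, hc, hcD⟩ := hT.exists_notMem_finite (hD.union (hD.image h))
    obtain ⟨hcD, hchD⟩ := not_or.1 hcD
    refine ⟨h⁻¹ c, hGT _ (G.inv_mem (hHG hh)) hc, fun hc' => hchD ⟨_, hc', by simp⟩, ?_⟩
    have hconj := swap_apply_apply h⁻¹ (h a) c
    rw [Perm.inv_def, symm_apply_apply] at hconj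
    rw [Perm.inv_def, hconj]
    have hh' := le_pointwiseClosure H hh
    exact mul_mem (mul_mem (inv_mem hh')
      (hsame _ (hGT h (hHG hh) (hDT ha)) c hc (by simp [hha, hcD]))) hh'
  have hall : ∀ x ∈ T, swap a x ∈ pointwiseClosure H := by
    intro x hx
    by_cases hxD : x ∈ D
    · exact hsame a (hDT ha) x hx (by simp [ha, hxD])
    · exact SubmonoidClass.swap_mem_trans _ hab (hsame b hb x hx (by simp [hbD, hxD]))
  intro x hx y hy
  exact SubmonoidClass.swap_mem_trans _ (swap_comm a x ▸ hall x hx) (hall y hy)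

theorem inf_stabilizer_covBy {G : Subgroup (Perm X)} {T D : Set X} (hT : T.Infinite)
    (hGT : ∀ g ∈ G, MapsTo g T T) (hD : D.Finite) (hne : D.Nonempty) (hDT : D ⊆ T)
    (hswap : ∀ x ∈ T, ∀ y ∈ T, swap x y ∈ pointwiseClosure G) :
    G ⊓ MulAction.stabilizer (Perm X) D ⋖ G := by
  refine ⟨inf_lt_left.2 fun hle => ?_, fun H hH hHG => hHG.not_ge fun g hg => ?_⟩
  · obtain ⟨d, hd⟩ := hne
    obtain ⟨y, hy, hyD⟩ := hT.exists_notMem_finite hD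
    obtain ⟨g, hg, hgd⟩ := hswap d (hDT hd) y hy {d} (finite_singleton d)
    have hgD := (MulAction.mem_stabilizer_set' hD).1 (hle hg) hd
    rw [Perm.smul_def, hgd rfl, swap_apply_left] at hgD
    exact hyD hgD
  · obtain ⟨τ, hτ, hτD, -⟩ := exists_mem_eqOn_of_swap_mem
      (swap_mem_pointwiseClosure_of_inf_stabilizer_lt hT hGT hD hDT hswap hHG.le hH) hD hDT
      ((hGT g hg).mono_left hDT)
    obtain ⟨k, hk, hkD⟩ := hτ D hD
    have hmem : k⁻¹ * g ∈ G ⊓ MulAction.stabilizer (Perm X) D := by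
      refine ⟨G.mul_mem (G.inv_mem (hHG.le hk)) hg, (MulAction.mem_stabilizer_set' hD).2 ?_⟩
      intro x hx
      rwa [Perm.smul_def, Perm.mul_apply, ← hτD hx, ← hkD hx, Perm.inv_def, symm_apply_apply]
    exact (H.mul_mem_cancel_left (H.inv_mem hk)).1 (hH.le hmem)

end PermutationGroups

/-! ### Cones -/

namespace Cantor

/-- The prefix of length `n` of an infinite word: `Stream'.take`, as an address. -/
def take (n : ℕ) (u : Cantor) : Addr := Stream'.take n u

/-- The tail of an infinite word after its first `n` letters: `Stream'.drop`, as a point of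
Cantor space. -/
def drop (n : ℕ) (u : Cantor) : Cantor := Stream'.drop n u

theorem length_take (n : ℕ) (u : Cantor) : (take n u).length = n := Stream'.length_take n u

theorem take_succ (n : ℕ) (u : Cantor) : take (n + 1) u = take n u ++ [u n] :=
  Stream'.take_succ' n

theorem take_add (m n : ℕ) (u : Cantor) : take (m + n) u = take m u ++ take n (drop m u) :=
  Stream'.take_add m n u

theorem take_prefix_take {m n : ℕ} (h : m ≤ n) (u : Cantor) : take m u <+: take n u :=
  Stream'.take_prefix_take_left m n u h

theorem eq_of_forall_take_eq {u v : Cantor} (h : ∀ n, take n u = take n v) : u = v :=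
  Stream'.take_theorem u v h

theorem drop_drop (m n : ℕ) (u : Cantor) : drop n (drop m u) = drop (m + n) u :=
  Stream'.drop_drop n m u

end Cantor

open Cantor (take drop)

theorem wcat_eq_append (α : Addr) (w : Cantor) : wcat α w = α ++ₛ w := by
  funext n
  by_cases hn : n < α.length
  · exact (dif_pos hn).trans (Stream'.get_append_left n α w hn).symm
  · obtain ⟨k, rfl⟩ := Nat.exists_eq_add_of_le (not_lt.1 hn)
    rw [wcat, dif_neg hn, Nat.add_sub_cancel_left]
    exact (Stream'.get_append_right k α w).symm

theorem wcat_append (α β : Addr) (w : Cantor) : wcat (α ++ β) w = wcat α (wcat β w) := by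
  rw [wcat_eq_append, wcat_eq_append, wcat_eq_append]
  exact Stream'.append_append_stream α β w

theorem wcat_take_drop (n : ℕ) (u : Cantor) : wcat (take n u) (drop n u) = u :=
  (wcat_eq_append _ _).trans (Stream'.append_take_drop n u)

theorem wcat_append_head (α : Addr) (w : Cantor) : wcat (α ++ [w 0]) (drop 1 w) = wcat α w := by
  rw [wcat_append]
  exact congrArg (wcat α) (wcat_take_drop 1 w)

theorem take_wcat (α : Addr) (w : Cantor) (n : ℕ) :
    take (α.length + n) (wcat α w) = α ++ take n w := by
  rw [wcat_eq_append]
  exact (Stream'.append_take n α w).symm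

theorem drop_wcat (α : Addr) (w : Cantor) : drop α.length (wcat α w) = w := by
  rw [wcat_eq_append]
  exact Stream'.drop_append_stream α w

theorem wcat_mem_cone (α : Addr) (w : Cantor) : wcat α w ∈ cone α := mem_range_self w

theorem mem_cone_iff {α : Addr} {u : Cantor} : u ∈ cone α ↔ take α.length u = α := by
  constructor
  · rintro ⟨w, rfl⟩
    exact (take_wcat α w 0).trans (List.append_nil α)
  · intro h
    exact ⟨drop α.length u, by simpa only [h] using wcat_take_drop α.length u⟩

theorem mem_cone_take (n : ℕ) (u : Cantor) : u ∈ cone (take n u) :=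
  ⟨drop n u, wcat_take_drop n u⟩

theorem cone_anti {α β : Addr} (h : α <+: β) : cone β ⊆ cone α := by
  obtain ⟨γ, rfl⟩ := h
  rintro _ ⟨w, rfl⟩
  exact ⟨wcat γ w, (wcat_append α γ w).symm⟩

theorem prefix_of_mem_cone {α β : Addr} {u : Cantor} (hα : u ∈ cone α) (hβ : u ∈ cone β)
    (hle : α.length ≤ β.length) : α <+: β := by
  rw [← mem_cone_iff.1 hα, ← mem_cone_iff.1 hβ]
  exact Cantor.take_prefix_take hle u

theorem apply_eq_of_mem_cone {α : Addr} {u v : Cantor} (hu : u ∈ cone α) (hv : v ∈ cone α)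
    {k : ℕ} (hk : k < α.length) : u k = v k := by
  obtain ⟨w, rfl⟩ := hu
  obtain ⟨w', rfl⟩ := hv
  simp only [wcat, hk, dif_pos]

theorem exists_forall_subsingleton_inter_cone {F : Set Cantor} (hF : F.Finite) :
    ∃ n, ∀ α : Addr, n ≤ α.length → (F ∩ cone α).Subsingleton := by
  have hsep : ∀ᶠ n in atTop, ∀ u ∈ F, ∀ v ∈ F, u ≠ v → ∃ k < n, u k ≠ v k := by
    refine (eventually_all_finite hF).2 fun u _ => (eventually_all_finite hF).2 fun v _ => ?_
    by_cases huv : u = v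
    · exact Eventually.of_forall fun _ hne => absurd huv hne
    · obtain ⟨k, hk⟩ := Function.ne_iff.1 huv
      exact (eventually_gt_atTop k).mono fun n hn _ => ⟨k, hn, hk⟩
  obtain ⟨n, hn⟩ := hsep.exists
  refine ⟨n, fun α hα u hu v hv => ?_⟩
  by_contra huv
  obtain ⟨k, hk, hne⟩ := hn u hu.1 v hv.1 huv
  exact hne (apply_eq_of_mem_cone hu.2 hv.2 (hk.trans_le hα))

/-! ### Thompson's group `V` -/

theorem actsOn.append {g : Perm Cantor} {α β : Addr} (h : actsOn g α β) (γ : Addr) :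
    actsOn g (α ++ γ) (β ++ γ) := fun w => by
  rw [wcat_append, wcat_append, h]

theorem actsOn.cone_eq_image {g : Perm Cantor} {α β : Addr} (h : actsOn g α β) :
    cone β = g '' cone α := by
  rw [cone, cone, ← range_comp]
  exact congrArg range (funext fun w => (h w).symm)

theorem isPrefixSubst_of_partition {ι : Type*} [Finite ι] {g : Perm Cantor} {A B : ι → Addr}
    (hdisj : Pairwise fun i j => Disjoint (cone (A i)) (cone (A j)))
    (hcover : ⋃ i, cone (A i) = univ) (hg : ∀ i, actsOn g (A i) (B i)) : IsPrefixSubst g := by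
  obtain ⟨n, ⟨e⟩⟩ := Finite.exists_equiv_fin ι
  refine ⟨n, A ∘ e.symm, B ∘ e.symm, fun i j hij => hdisj (e.symm.injective.ne hij), ?_,
    fun i j hij => ?_, ?_, fun i => hg _⟩
  · exact (e.symm.surjective.iUnion_comp fun i => cone (A i)).trans hcover
  · simp only [Function.comp_apply, (hg _).cone_eq_image]
    exact (disjoint_image_iff g.injective).2 (hdisj (e.symm.injective.ne hij))
  · simp only [Function.comp_apply, (hg _).cone_eq_image]
    rw [← image_iUnion, e.symm.surjective.iUnion_comp fun i => cone (A i), hcover,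
      image_univ_of_surjective g.surjective]

theorem isPrefixSubst_iff_exists_length {g : Perm Cantor} :
    IsPrefixSubst g ↔ ∃ N, ∀ α : Addr, N ≤ α.length → ∃ β, actsOn g α β := by
  constructor
  · rintro ⟨n, A, B, -, hA, -, -, hg⟩
    obtain ⟨N, hN⟩ := (finite_range fun i => (A i).length).bddAbove
    refine ⟨N, fun α hα => ?_⟩
    obtain ⟨i, hi⟩ := mem_iUnion.1 (hA ▸ mem_univ (wcat α fun _ => false))
    obtain ⟨γ, rfl⟩ := prefix_of_mem_cone hi (wcat_mem_cone _ _) ((hN ⟨i, rfl⟩).trans hα)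
    exact ⟨B i ++ γ, actsOn.append (hg i) γ⟩
  · rintro ⟨N, hN⟩
    choose B hB using fun α : List.Vector Bool N => hN α.1 α.2.ge
    refine isPrefixSubst_of_partition (fun α β hαβ => ?_) (eq_univ_of_forall fun u => ?_) hB
    · refine disjoint_left.2 fun u hα hβ => hαβ (Subtype.ext ?_)
      rw [← mem_cone_iff.1 hα, ← mem_cone_iff.1 hβ, α.2, β.2]
    · exact mem_iUnion.2 ⟨⟨take N u, Cantor.length_take N u⟩, mem_cone_take N u⟩

theorem IsPrefixSubst.exists_actsOn_length_ge {g : Perm Cantor} (hg : IsPrefixSubst g) (n : ℕ) :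
    ∃ N, ∀ α : Addr, N ≤ α.length → ∃ β, actsOn g α β ∧ n ≤ β.length := by
  obtain ⟨N, hN⟩ := isPrefixSubst_iff_exists_length.1 hg
  refine ⟨N + n, fun α hα => ?_⟩
  obtain ⟨β, hβ⟩ := hN (α.take N) (by simp only [List.length_take]; omega)
  refine ⟨β ++ α.drop N, ?_, by simp only [List.length_append, List.length_drop]; omega⟩
  simpa only [List.take_append_drop] using hβ.append (α.drop N)

/-- Thompson's group `V` as a subgroup of the group of all permutations of Cantor space. -/
def thompsonV : Subgroup (Perm Cantor) where
  carrier := VSet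
  one_mem' := isPrefixSubst_iff_exists_length.2 ⟨0, fun α _ => ⟨α, fun _ => rfl⟩⟩
  mul_mem' {g h} hg hh := by
    obtain ⟨N, hN⟩ := isPrefixSubst_iff_exists_length.1 hg
    obtain ⟨M, hM⟩ := IsPrefixSubst.exists_actsOn_length_ge hh N
    refine isPrefixSubst_iff_exists_length.2 ⟨M, fun α hα => ?_⟩
    obtain ⟨β, hβ, hβN⟩ := hM α hα
    obtain ⟨γ, hγ⟩ := hN β hβN
    exact ⟨γ, fun w => by rw [Perm.mul_apply, hβ, hγ]⟩
  inv_mem' {g} := fun ⟨n, A, B, hA, hAcover, hB, hBcover, hg⟩ =>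
    ⟨n, B, A, hB, hBcover, hA, hAcover, fun i w => by rw [Perm.inv_eq_iff_eq, hg]⟩

theorem setStab_eq_coe_inf_stabilizer (D : Set Cantor) :
    setStab D = ↑(thompsonV ⊓ MulAction.stabilizer (Perm Cantor) D) := rfl

theorem isMaximalSubgroupOfV_of_covBy {M : Subgroup (Perm Cantor)} (hM : M ⋖ thompsonV) :
    IsMaximalSubgroupOfV (M : Set (Perm Cantor)) := by
  refine ⟨⟨M.one_mem, fun _ hg _ hh => M.mul_mem hg hh, fun _ hg => M.inv_mem hg⟩, hM.le,
    fun h => hM.ne (SetLike.coe_injective h), ?_⟩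
  rintro H ⟨hone, hmul, hinv⟩ hMH hHV
  let H' : Subgroup (Perm Cantor) :=
    { carrier := H, one_mem' := hone, mul_mem' := fun hg hh => hmul _ hg _ hh,
      inv_mem' := fun hg => hinv _ hg }
  exact (hM.eq_or_eq (c := H') hMH hHV)
    |>.imp (congrArg SetLike.coe) (congrArg SetLike.coe)

/-! ### Swaps of disjoint cones -/

open Classical in
/-- The map exchanging the cones of `α` and `β` (when these are disjoint) by prefix
substitution, and fixing all other points. -/
noncomputable def coneSwapFun (α β : Addr) (u : Cantor) : Cantor :=
  if u ∈ cone α then wcat β (drop α.length u)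
  else if u ∈ cone β then wcat α (drop β.length u) else u

theorem coneSwapFun_wcat_left (α β : Addr) (w : Cantor) :
    coneSwapFun α β (wcat α w) = wcat β w := by
  rw [coneSwapFun, if_pos (wcat_mem_cone α w), drop_wcat]

theorem coneSwapFun_wcat_right {α β : Addr} (h : Disjoint (cone α) (cone β)) (w : Cantor) :
    coneSwapFun α β (wcat β w) = wcat α w := by
  rw [coneSwapFun, if_neg (disjoint_right.1 h (wcat_mem_cone β w)),
    if_pos (wcat_mem_cone β w), drop_wcat]

theorem coneSwapFun_of_notMem {α β : Addr} {u : Cantor} (hα : u ∉ cone α) (hβ : u ∉ cone β) :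
    coneSwapFun α β u = u := by
  rw [coneSwapFun, if_neg hα, if_neg hβ]

theorem involutive_coneSwapFun {α β : Addr} (h : Disjoint (cone α) (cone β)) :
    Function.Involutive (coneSwapFun α β) := by
  intro u
  by_cases hα : u ∈ cone α
  · obtain ⟨w, rfl⟩ := hα
    rw [coneSwapFun_wcat_left, coneSwapFun_wcat_right h]
  by_cases hβ : u ∈ cone β
  · obtain ⟨w, rfl⟩ := hβ
    rw [coneSwapFun_wcat_right h, coneSwapFun_wcat_left]
  · rw [coneSwapFun_of_notMem hα hβ, coneSwapFun_of_notMem hα hβ]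

theorem isPrefixSubst_coneSwap {α β : Addr} (h : Disjoint (cone α) (cone β)) :
    IsPrefixSubst (involutive_coneSwapFun h).toPerm := by
  set g := (involutive_coneSwapFun h).toPerm
  refine isPrefixSubst_iff_exists_length.2 ⟨max α.length β.length, fun γ hγ => ?_⟩
  by_cases hα : α <+: γ
  · obtain ⟨δ, rfl⟩ := hα
    exact ⟨β ++ δ, actsOn.append (g := g) (coneSwapFun_wcat_left α β) δ⟩
  by_cases hβ : β <+: γ
  · obtain ⟨δ, rfl⟩ := hβ
    exact ⟨α ++ δ, actsOn.append (g := g) (coneSwapFun_wcat_right h) δ⟩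
  exact ⟨γ, fun w => coneSwapFun_of_notMem
    (fun hw => hα (prefix_of_mem_cone hw (wcat_mem_cone γ w) (le_of_max_le_left hγ)))
    (fun hw => hβ (prefix_of_mem_cone hw (wcat_mem_cone γ w) (le_of_max_le_right hγ)))⟩

/-! ### Tail classes -/

theorem tailEq_iff_exists_drop_eq {u v : Cantor} : TailEq u v ↔ ∃ m n, drop m u = drop n v := by
  constructor
  · rintro ⟨α, β, w, rfl, rfl⟩
    exact ⟨α.length, β.length, by rw [drop_wcat, drop_wcat]⟩
  · rintro ⟨m, n, h⟩
    exact ⟨take m u, take n v, drop m u, (wcat_take_drop m u).symm, by rw [h, wcat_take_drop]⟩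

theorem TailEq.symm {u v : Cantor} : TailEq u v → TailEq v u :=
  fun ⟨α, β, w, hu, hv⟩ => ⟨β, α, w, hv, hu⟩

theorem TailEq.trans {u v w : Cantor} (huv : TailEq u v) (hvw : TailEq v w) : TailEq u w := by
  obtain ⟨m, n, huv⟩ := tailEq_iff_exists_drop_eq.1 huv
  obtain ⟨p, q, hvw⟩ := tailEq_iff_exists_drop_eq.1 hvw
  refine tailEq_iff_exists_drop_eq.2 ⟨m + p, q + n, ?_⟩
  calc drop (m + p) u = drop p (drop n v) := by rw [← huv, Cantor.drop_drop]
    _ = drop n (drop p v) := by rw [Cantor.drop_drop, Cantor.drop_drop, add_comm]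
    _ = drop (q + n) w := by rw [hvw, Cantor.drop_drop]

theorem IsPrefixSubst.tailEq_apply {g : Perm Cantor} (hg : IsPrefixSubst g) (u : Cantor) :
    TailEq (g u) u := by
  obtain ⟨N, hN⟩ := isPrefixSubst_iff_exists_length.1 hg
  obtain ⟨β, hβ⟩ := hN (take N u) (Cantor.length_take N u).ge
  exact ⟨β, take N u, drop N u, by rw [← hβ, wcat_take_drop], (wcat_take_drop N u).symm⟩

theorem infinite_setOf_tailEq (d : Cantor) : {u | TailEq u d}.Infinite := by
  let f : ℕ → Cantor := fun n => wcat (List.replicate n false ++ [true]) d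
  have hf : Function.Injective f := by
    refine Function.Injective.of_lt_imp_ne fun m n hmn h => ?_
    have hm : f m m = true := by simp [f, wcat]
    have hn : f n m = false := by simp [f, wcat, hmn, hmn.trans n.lt_succ_self]
    simp [h, hn] at hm
  exact infinite_of_injective_forall_mem hf fun n => ⟨_, [], d, rfl, by rw [wcat_eq_append]; rfl⟩

theorem swap_mem_pointwiseClosure_thompsonV [DecidableEq Cantor] {x y : Cantor}
    (hxy : TailEq x y) : swap x y ∈ pointwiseClosure thompsonV := by
  rcases eq_or_ne x y with rfl | hne
  · rw [swap_self]
    exact one_mem _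
  intro F hF
  obtain ⟨n, hn⟩ := exists_forall_subsingleton_inter_cone ((hF.insert y).insert x)
  have hx : x ∈ insert x (insert y F) := mem_insert _ _
  have hy : y ∈ insert x (insert y F) := mem_insert_of_mem _ (mem_insert _ _)
  obtain ⟨α, β, w, hα, hβ, rfl, rfl⟩ : ∃ α β w, n ≤ α.length ∧ n ≤ β.length ∧
      x = wcat α w ∧ y = wcat β w := by
    obtain ⟨α, β, w, rfl, rfl⟩ := hxy
    refine ⟨α ++ take n w, β ++ take n w, drop n w, ?_, ?_, by rw [wcat_append, wcat_take_drop],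
      by rw [wcat_append, wcat_take_drop]⟩ <;>
    simp only [List.length_append, Cantor.length_take, Nat.le_add_left]
  have hdisj : Disjoint (cone α) (cone β) := by
    refine disjoint_left.2 fun u huα huβ => hne ?_
    rcases le_total α.length β.length with hle | hle
    · have hsub := cone_anti (prefix_of_mem_cone huα huβ hle)
      exact hn α hα ⟨hx, wcat_mem_cone α w⟩ ⟨hy, hsub (wcat_mem_cone β w)⟩
    · have hsub := cone_anti (prefix_of_mem_cone huβ huα hle)
      exact hn β hβ ⟨hx, hsub (wcat_mem_cone α w)⟩ ⟨hy, wcat_mem_cone β w⟩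
  refine ⟨_, isPrefixSubst_coneSwap hdisj, fun z hz => ?_⟩
  have hz' : z ∈ insert (wcat α w) (insert (wcat β w) F) := by simp [hz]
  rw [Function.Involutive.coe_toPerm, swap_apply_def]
  split_ifs with hzx hzy
  · rw [hzx, coneSwapFun_wcat_left]
  · rw [hzy, coneSwapFun_wcat_right hdisj]
  · exact coneSwapFun_of_notMem (fun h => hzx (hn α hα ⟨hz', h⟩ ⟨hx, wcat_mem_cone α w⟩))
      (fun h => hzy (hn β hβ ⟨hz', h⟩ ⟨hy, wcat_mem_cone β w⟩))

theorem isMaximalSubgroupOfV_setStab {D : Set Cantor} (hD : D.Finite) (hne : D.Nonempty)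
    (htail : ∀ u ∈ D, ∀ v ∈ D, TailEq u v) : IsMaximalSubgroupOfV (setStab D) := by
  classical
  obtain ⟨d, hd⟩ := id hne
  rw [setStab_eq_coe_inf_stabilizer]
  exact isMaximalSubgroupOfV_of_covBy <| inf_stabilizer_covBy (infinite_setOf_tailEq d)
    (fun _ hg u hu => (IsPrefixSubst.tailEq_apply hg u).trans hu) hD hne
    (fun u hu => htail u hu d hd)
    fun _ hx _ hy => swap_mem_pointwiseClosure_thompsonV (hx.trans hy.symm)

/-! ### The type system of traces of a set of points -/

/-- Two addresses have the same trace of `D` if the intersections of `D` with their cones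
correspond under prefix substitution. -/
def SameTrace (D : Set Cantor) (α β : Addr) : Prop :=
  ∀ w, wcat α w ∈ D ↔ wcat β w ∈ D

theorem isTypeSystem_sameTrace (D : Set Cantor) : IsTypeSystem (SameTrace D) := by
  refine ⟨⟨fun _ _ => Iff.rfl, fun h w => (h w).symm, fun h h' w => (h w).trans (h' w)⟩,
    fun α β h => ⟨fun w => ?_, fun w => ?_⟩, fun α β hfalse htrue w => ?_⟩
  · simpa only [wcat_append] using h (wcat [false] w)
  · simpa only [wcat_append] using h (wcat [true] w)
  · rw [← wcat_append_head α, ← wcat_append_head β]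
    cases w 0
    exacts [hfalse _, htrue _]

theorem exists_not_sameTrace {D : Set Cantor} (hD : D.Finite) (hne : D.Nonempty) :
    ∃ α β, ¬ SameTrace D α β := by
  by_contra! hall
  obtain ⟨d, hd⟩ := hne
  refine infinite_setOf_tailEq d (hD.subset ?_)
  rintro _ ⟨α, β, w, rfl, rfl⟩
  exact (hall α β w).2 hd

theorem SimpleTS.iff_sameTrace {r : Addr → Addr → Prop} (hr : SimpleTS r) {D : Set Cantor}
    (hD : D.Finite) (hne : D.Nonempty) (hrD : ∀ α β, r α β → SameTrace D α β) (α β : Addr) :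
    r α β ↔ SameTrace D α β := by
  obtain ⟨α', β', hnot⟩ := exists_not_sameTrace hD hne
  rcases hr.2.2 _ ⟨isTypeSystem_sameTrace D, hrD⟩ with h | h
  · exact (h α β).symm
  · exact absurd (h α' β') hnot

theorem compl_finite_iff_exists_length {A : Type*} [Finite A] {S : Set (List A)} :
    Sᶜ.Finite ↔ ∃ N, ∀ α : List A, N ≤ α.length → α ∈ S := by
  constructor
  · intro hS
    obtain ⟨N, hN⟩ := (hS.image List.length).bddAbove
    refine ⟨N + 1, fun α hα => by_contra fun hαS => ?_⟩
    exact (Nat.lt_of_succ_le hα).not_ge (hN ⟨α, hαS, rfl⟩)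
  · rintro ⟨N, hN⟩
    exact (List.finite_length_lt A N).subset fun α hα => not_le.1 fun h => hα (hN α h)

theorem exists_forall_sameTrace_children_iff {D : Set Cantor} (hD : D.Finite) :
    ∃ n, ∀ α : Addr, n ≤ α.length →
      (SameTrace D (α ++ [false]) (α ++ [true]) ↔ Disjoint D (cone α)) := by
  obtain ⟨n, hn⟩ := exists_forall_subsingleton_inter_cone hD
  refine ⟨n, fun α hα => ⟨fun h => ?_, fun h w => ?_⟩⟩
  · have hnot : ∀ w, wcat (α ++ [false]) w ∉ D := by
      intro w hw
      have heq := hn α hα ⟨hw, cone_anti (List.prefix_append _ _) (wcat_mem_cone _ w)⟩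
        ⟨(h w).1 hw, cone_anti (List.prefix_append _ _) (wcat_mem_cone _ w)⟩
      simpa [wcat] using congrFun heq α.length
    rw [disjoint_right]
    rintro _ ⟨w, rfl⟩ hw
    rw [← wcat_append_head] at hw
    generalize w 0 = b at hw
    cases b
    exacts [hnot _ hw, hnot _ ((h _).2 hw)]
  · have hnot : ∀ b, wcat (α ++ [b]) w ∉ D := fun b hw =>
      disjoint_left.1 h hw (cone_anti (List.prefix_append _ _) (wcat_mem_cone _ w))
    simp only [hnot]

theorem stabilizes_sameTrace_of_mem_setStab {D : Set Cantor} {g : Perm Cantor}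
    (hg : g ∈ setStab D) : Stabilizes (SameTrace D) g := by
  rw [setStab_eq_coe_inf_stabilizer] at hg
  obtain ⟨N, hN⟩ := isPrefixSubst_iff_exists_length.1 hg.1
  have hgD : ∀ u, g u ∈ D ↔ u ∈ D := MulAction.mem_stabilizer_set.1 hg.2
  refine ⟨{α | N ≤ α.length}, compl_finite_iff_exists_length.2 ⟨N, fun _ => id⟩, hN, ?_⟩
  intro α _ α' _ β β' hαβ hαβ'
  refine forall_congr' fun w => ?_
  rw [← hαβ w, ← hαβ' w, hgD, hgD]

theorem mem_setStab_of_stabilizes_sameTrace {D : Set Cantor} (hD : D.Finite) {g : Perm Cantor}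
    (hg : IsPrefixSubst g) (hstab : Stabilizes (SameTrace D) g) : g ∈ setStab D := by
  rw [setStab_eq_coe_inf_stabilizer]
  refine ⟨hg, (MulAction.mem_stabilizer_set' hD).2 fun u hu => by_contra fun hgu => ?_⟩
  obtain ⟨Ω₀, hΩ₀, -, hiff⟩ := hstab
  obtain ⟨L, hL⟩ := compl_finite_iff_exists_length.1 hΩ₀
  obtain ⟨n, hn⟩ := exists_forall_sameTrace_children_iff hD
  obtain ⟨m, hm⟩ := exists_forall_subsingleton_inter_cone (hD.insert (g u))
  obtain ⟨N, hN⟩ := hg.exists_actsOn_length_ge (max n m)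
  obtain ⟨α, huα, hLα, hnα, hNα⟩ : ∃ α, u ∈ cone α ∧ L ≤ α.length ∧ n ≤ α.length ∧
      N ≤ α.length :=
    ⟨_, mem_cone_take (max L (max n N)) u, by simp [Cantor.length_take]⟩
  obtain ⟨β, hαβ, hβ⟩ := hN α hNα
  have hβD : Disjoint D (cone β) := by
    refine disjoint_left.2 fun v hv hvβ => hgu ?_
    have hguβ : g u ∈ cone β := hαβ.cone_eq_image ▸ mem_image_of_mem g huα
    rwa [hm β (le_of_max_le_right hβ) ⟨Or.inr hv, hvβ⟩ ⟨Or.inl rfl, hguβ⟩] at hv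
  have hchild : ∀ b, α ++ [b] ∈ Ω₀ := fun b => hL _ (by simp; omega)
  have hαD : Disjoint D (cone α) := by
    rwa [← hn α hnα, hiff _ (hchild _) _ (hchild _) _ _ (hαβ.append _) (hαβ.append _),
      hn β (le_of_max_le_left hβ)]
  exact disjoint_left.1 hαD hu huα

theorem stabSet_sameTrace {D : Set Cantor} (hD : D.Finite) : StabSet (SameTrace D) = setStab D :=
  Subset.antisymm (fun _ hg => mem_setStab_of_stabilizes_sameTrace hD hg.1 hg.2)
    fun _ hg => ⟨hg.1, stabilizes_sameTrace_of_mem_setStab hg⟩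

/-! ### Limit points of a set of types -/

/-- The points of Cantor space all of whose sufficiently long prefixes lie in `Q`. -/
def limitSet (Q : Set Addr) : Set Cantor := {u | ∀ᶠ n in atTop, take n u ∈ Q}

theorem wcat_mem_limitSet_iff {Q : Set Addr} {α : Addr} {w : Cantor} :
    wcat α w ∈ limitSet Q ↔ ∀ᶠ n in atTop, α ++ take n w ∈ Q := by
  rw [limitSet, mem_ofPred_eq]
  conv_lhs => rw [← map_add_atTop_eq_nat α.length, eventually_map]
  simp only [add_comm _ α.length, take_wcat]

theorem ChildClosed.append_mem {S : Set Addr} (hS : ChildClosed S) {α : Addr} (hα : α ∈ S)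
    (γ : Addr) : α ++ γ ∈ S := by
  induction γ generalizing α with
  | nil => rwa [List.append_nil]
  | cons b γ ih =>
    rw [List.append_cons]
    cases b
    exacts [ih (hS α hα).1, ih (hS α hα).2]

theorem Coherent.append {r : Addr → Addr → Prop} (hr : Coherent r) {α β : Addr} (h : r α β)
    (γ : Addr) : r (α ++ γ) (β ++ γ) := by
  induction γ generalizing α β with
  | nil => rwa [List.append_nil, List.append_nil]
  | cons b γ ih =>
    rw [List.append_cons, List.append_cons β]
    cases b
    exacts [ih (hr α β h).1, ih (hr α β h).2]

theorem take_mem_of_mem_limitSet {Q R : Set Addr} {t : ℕ} (hdisj : Disjoint Q R)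
    (hcover : ∀ α : Addr, t ≤ α.length → α ∈ Q ∪ R) (hR : ChildClosed R) {u : Cantor}
    (hu : u ∈ limitSet Q) {n : ℕ} (hn : t ≤ n) : take n u ∈ Q := by
  refine (hcover (take n u) (by rwa [Cantor.length_take])).resolve_right fun hnR => ?_
  rw [← wcat_take_drop n u] at hu
  obtain ⟨m, hm⟩ := (wcat_mem_limitSet_iff.1 hu).exists
  exact disjoint_left.1 hdisj hm (hR.append_mem hnR _)

theorem sameTrace_limitSet {r : Addr → Addr → Prop} (hr : IsTypeSystem r) {Q : Set Addr}
    (hQ : Saturated r Q) {α β : Addr} (h : r α β) : SameTrace (limitSet Q) α β := by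
  obtain ⟨hequiv, hcoh, -⟩ := hr
  intro w
  simp only [wcat_mem_limitSet_iff]
  refine eventually_congr (Eventually.of_forall fun n => ⟨fun hn => ?_, fun hn => ?_⟩)
  · exact hQ _ hn _ (hcoh.append h _)
  · exact hQ _ hn _ (hcoh.append (hequiv.symm h) _)

theorem StronglyConnected.exists_child_mem {r : Addr → Addr → Prop} {Q : Set Addr}
    (hQ : StronglyConnected r Q) {α : Addr} (hα : α ∈ Q) : ∃ b, α ++ [b] ∈ Q := by
  obtain ⟨γ, hγ, hpath, -⟩ := hQ α hα α hα
  obtain ⟨b, δ, rfl⟩ := List.exists_cons_of_ne_nil hγ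
  exact ⟨b, hpath [b] ⟨δ, rfl⟩⟩

theorem exists_forall_append_take_mem {Q : Set Addr} (hQ : ∀ α ∈ Q, ∃ b, α ++ [b] ∈ Q)
    {α : Addr} (hα : α ∈ Q) : ∃ w : Cantor, ∀ n, α ++ take n w ∈ Q := by
  choose! f hf using hQ
  let a : ℕ → Addr := fun n => (fun β => β ++ [f β])^[n] α
  have ha : ∀ n, a (n + 1) = a n ++ [f (a n)] := fun n => Function.iterate_succ_apply' _ n α
  let w : Cantor := fun n => f (a n)
  have hw : ∀ n, α ++ take n w = a n := by
    intro n
    induction n with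
    | zero => exact List.append_nil α
    | succ n ih =>
      rw [Cantor.take_succ, ← List.append_assoc, ih, ha]
  refine ⟨w, fun n => hw n ▸ ?_⟩
  induction n with
  | zero => exact hα
  | succ n ih => exact ha n ▸ hf _ ih

theorem nonempty_limitSet {r : Addr → Addr → Prop} {Q : Set Addr} (hne : Q.Nonempty)
    (hQ : StronglyConnected r Q) : (limitSet Q).Nonempty := by
  obtain ⟨α, hα⟩ := hne
  obtain ⟨w, hw⟩ := exists_forall_append_take_mem (fun _ => hQ.exists_child_mem) hα
  exact ⟨wcat α w, wcat_mem_limitSet_iff.2 (Eventually.of_forall hw)⟩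

/-! ### The limit set in the nonbranching case -/

theorem eq_of_append_singleton_mem {Q : Set Addr} (hQ : QDagger Q = ∅) {α : Addr} {a b : Bool}
    (hα : α ∈ Q) (ha : α ++ [a] ∈ Q) (hb : α ++ [b] ∈ Q) : a = b := by
  by_contra hab
  have hmem : α ∈ QDagger Q := by
    cases a <;> cases b
    exacts [absurd rfl hab, ⟨hα, ha, hb⟩, ⟨hα, hb, ha⟩, absurd rfl hab]
  exact notMem_empty α (hQ ▸ hmem)

theorem eq_of_forall_append_take_mem {Q : Set Addr} (hQ : QDagger Q = ∅) {α : Addr}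
    {w w' : Cantor} (hw : ∀ n, α ++ take n w ∈ Q) (hw' : ∀ n, α ++ take n w' ∈ Q) : w = w' := by
  refine Cantor.eq_of_forall_take_eq fun n => ?_
  induction n with
  | zero => rfl
  | succ n ih =>
    have hn := hw (n + 1)
    have hn' := hw' (n + 1)
    rw [Cantor.take_succ, ← List.append_assoc] at hn hn'
    rw [Cantor.take_succ, Cantor.take_succ, ih,
      eq_of_append_singleton_mem hQ (hw n) hn (ih ▸ hn')]

section Nonbranching

variable {Q : Set Addr} {t : ℕ}

theorem injOn_take_limitSet (hQ : QDagger Q = ∅)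
    (ht : ∀ u ∈ limitSet Q, ∀ n ≥ t, take n u ∈ Q) : InjOn (take t) (limitSet Q) := by
  intro u hu v hv huv
  have hpath : ∀ x ∈ limitSet Q, ∀ n, take t x ++ take n (drop t x) ∈ Q := fun x hx n =>
    Cantor.take_add t n x ▸ ht x hx (t + n) (Nat.le_add_right t n)
  have hdrop : drop t u = drop t v :=
    eq_of_forall_append_take_mem hQ (hpath u hu) (huv ▸ hpath v hv)
  rw [← wcat_take_drop t u, ← wcat_take_drop t v, huv, hdrop]

theorem finite_limitSet (hQ : QDagger Q = ∅)
    (ht : ∀ u ∈ limitSet Q, ∀ n ≥ t, take n u ∈ Q) : (limitSet Q).Finite :=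
  Finite.of_injOn (fun u _ => Cantor.length_take t u) (injOn_take_limitSet hQ ht)
    (List.finite_length_eq Bool t)

-- The only path through `𝒬` from the type of `take t u` visits the type of `take t v`.
theorem exists_drop_add_eq_drop {r : Addr → Addr → Prop} (hr : IsTypeSystem r)
    (hsat : Saturated r Q) (hconn : StronglyConnected r Q) (hQ : QDagger Q = ∅)
    (ht : ∀ u ∈ limitSet Q, ∀ n ≥ t, take n u ∈ Q) {u v : Cantor} (hu : u ∈ limitSet Q)
    (hv : v ∈ limitSet Q) : ∃ p > 0, drop (t + p) u = drop t v := by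
  obtain ⟨γ, hγ, -, huv⟩ := hconn _ (ht u hu t le_rfl) _ (ht v hv t le_rfl)
  have hmem : wcat (take t u ++ γ) (drop t v) ∈ limitSet Q := by
    rwa [sameTrace_limitSet hr hsat huv _, wcat_take_drop]
  have htake : take t (wcat (take t u ++ γ) (drop t v)) = take t u := by
    have h := mem_cone_iff.1 (wcat_mem_cone (take t u) (wcat γ (drop t v)))
    rwa [Cantor.length_take, ← wcat_append] at h
  have hlen : (take t u ++ γ).length = t + γ.length := by
    rw [List.length_append, Cantor.length_take]
  refine ⟨γ.length, List.length_pos_iff.2 hγ, ?_⟩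
  rw [← injOn_take_limitSet hQ ht hmem hu htake, ← hlen, drop_wcat]

theorem eventuallyPeriodic_of_drop_add_eq_drop {u : Cantor} {k p : ℕ} (hp : 0 < p)
    (h : drop (k + p) u = drop k u) : EventuallyPeriodic u := by
  refine ⟨k, p, hp, fun n hn => ?_⟩
  obtain ⟨m, rfl⟩ := Nat.exists_eq_add_of_le' hn
  rw [add_assoc]
  exact congrFun h m

end Nonbranching

/-- If a simple type system is atomic quasinuclear but not
branching, then `Stab_V(𝒫)` is the setwise stabilizer of a finite set of rational
points of Cantor space of the same tail class, and this is a maximal subgroup of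
Thompson's group `V`. -/
theorem stabSet_of_nonbranching_atomicQuasinuclear
    (r : Addr → Addr → Prop) (hr : SimpleTS r)
    (h : ∃ Q R : Set Addr, QuasinuclearData r Q R ∧ IsSingleType r R ∧
      QDagger Q = ∅) :
    ∃ D : Set Cantor, D.Finite ∧ D.Nonempty ∧
      (∀ u ∈ D, EventuallyPeriodic u) ∧ (∀ u ∈ D, ∀ v ∈ D, TailEq u v) ∧
      StabSet r = setStab D ∧ IsMaximalSubgroupOfV (setStab D) := by
  obtain ⟨Q, R, ⟨hne, -, hsat, -, hdisj, ⟨t, -, hcover⟩, ⟨-, -, hR, -⟩, hconn, -, -⟩, -, hQ⟩ := h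
  have ht : ∀ u ∈ limitSet Q, ∀ n ≥ t, take n u ∈ Q := fun _ hu _ =>
    take_mem_of_mem_limitSet hdisj hcover hR hu
  have hdrop : ∀ u ∈ limitSet Q, ∀ v ∈ limitSet Q, ∃ p > 0, drop (t + p) u = drop t v :=
    fun _ hu _ hv => exists_drop_add_eq_drop hr.1 hsat hconn hQ ht hu hv
  have hfin : (limitSet Q).Finite := finite_limitSet hQ ht
  have hnonempty : (limitSet Q).Nonempty := nonempty_limitSet hne hconn
  have htail : ∀ u ∈ limitSet Q, ∀ v ∈ limitSet Q, TailEq u v := fun u hu v hv =>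
    let ⟨p, _, h⟩ := hdrop u hu v hv
    tailEq_iff_exists_drop_eq.2 ⟨t + p, t, h⟩
  have hrD : r = SameTrace (limitSet Q) := funext₂ fun α β => propext <|
    hr.iff_sameTrace hfin hnonempty (fun _ _ => sameTrace_limitSet hr.1 hsat) α β
  refine ⟨limitSet Q, hfin, hnonempty, fun u hu => ?_, htail, hrD ▸ stabSet_sameTrace hfin,
    isMaximalSubgroupOfV_setStab hfin hnonempty htail⟩
  obtain ⟨p, hp, h⟩ := hdrop u hu u hu
  exact eventuallyPeriodic_of_drop_add_eq_drop hp h
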